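/- Let F, G : ℂ × ℂ → ℂ satisfy the WZ-pair relation F(n+1,k) − F(n,k) = G(n,k+1) − G(n,k) for all complex numbers n and k. Assume that for every complex number x: (i) the series ∑_{n=0}^∞ G(x+n, 0) and ∑_{n=0}^∞ F(x, n) (sums over nonnegative integers n) converge; and (ii) G(x+n, 0) → 0 and G(x, n) → 0 as the integer n → ∞. Define t(x) = ∑_{n=0}^∞ G(x+n, 0) − ∑_{n=0}^∞ F(x, n). Then t(x+1) = t(x) for every complex number x. -/

import Mathlib

/-!
The WZ relation at `(x, k)`, summed over `k`, telescopes: since `G (x, k) → 0`, it gives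
`∑ F (x + 1, k) - ∑ F (x, k) = -G (x, 0)`. Replacing `x` by `x + 1` in `∑ G (x + n, 0)` drops the
term `G (x, 0)`, so both series change by the same amount.
-/

open Filter Topology SummationFilter Finset

section ConditionalSums

variable {M : Type*} [TopologicalSpace M]

lemma hasSum_conditional_nat_iff_tendsto [AddCommMonoid M] {f : ℕ → M} {a : M} :
    HasSum f a (conditional ℕ) ↔ Tendsto (fun N ↦ ∑ n ∈ range N, f n) atTop (𝓝 a) := by
  rw [HasSum, conditional_filter_eq_map_range, tendsto_map'_iff, Function.comp_def]

variable [AddCommGroup M] [IsTopologicalAddGroup M] {f : ℕ → M} {a : M}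

lemma hasSum_conditional_nat_succ (hf : HasSum f a (conditional ℕ)) :
    HasSum (fun n ↦ f (n + 1)) (a - f 0) (conditional ℕ) := by
  rw [hasSum_conditional_nat_iff_tendsto] at hf ⊢
  refine (((tendsto_add_atTop_iff_nat 1).2 hf).sub_const (f 0)).congr fun N ↦ ?_
  rw [sum_range_succ', add_sub_cancel_right]

lemma tsum_conditional_add_one_add_natCast {R : Type*} [AddMonoidWithOne R] [T2Space M]
    {g : R → M} {x : R} (hg : Summable (fun n : ℕ ↦ g (x + n)) (conditional ℕ)) :
    ∑'[conditional ℕ] n : ℕ, g (x + 1 + n) = (∑'[conditional ℕ] n : ℕ, g (x + n)) - g x := by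
  have hshift (n : ℕ) : x + 1 + n = x + (n + 1 : ℕ) := by
    rw [add_comm n 1, Nat.cast_add, Nat.cast_one, add_assoc]
  simpa only [hshift, Nat.cast_zero, add_zero] using (hasSum_conditional_nat_succ hg.hasSum).tsum_eq

lemma hasSum_conditional_nat_succ_sub_of_tendsto (hf : Tendsto f atTop (𝓝 a)) :
    HasSum (fun n ↦ f (n + 1) - f n) (a - f 0) (conditional ℕ) := by
  simpa only [hasSum_conditional_nat_iff_tendsto, sum_range_sub] using hf.sub_const (f 0)

end ConditionalSums

/-- `(F, G)` is a WZ-pair: the relation that turns a sum over `k` of differences of `F` in its first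
argument into a telescoping one. It is required at all arguments in `R`, such as `R = ℂ`, and not
only at the integers. -/
def IsWZPair {R M : Type*} [Add R] [One R] [Sub M] (F G : R × R → M) : Prop :=
  ∀ n k : R, F (n + 1, k) - F (n, k) = G (n, k + 1) - G (n, k)

section WZPair

variable {R M : Type*} [AddMonoidWithOne R] [AddCommGroup M] [TopologicalSpace M]
  [IsTopologicalAddGroup M] {F G : R × R → M}

lemma IsWZPair.hasSum_sub (h : IsWZPair F G) {x : R} {l : M}
    (hG : Tendsto (fun k : ℕ ↦ G (x, k)) atTop (𝓝 l)) :
    HasSum (fun k : ℕ ↦ F (x + 1, k) - F (x, k)) (l - G (x, 0)) (conditional ℕ) := by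
  simpa only [h x, Nat.cast_succ, Nat.cast_zero] using
    hasSum_conditional_nat_succ_sub_of_tendsto hG

lemma IsWZPair.tsum_sub_tsum [T2Space M] (h : IsWZPair F G) {x : R} {l : M}
    (hF : Summable (fun k : ℕ ↦ F (x, k)) (conditional ℕ))
    (hG : Tendsto (fun k : ℕ ↦ G (x, k)) atTop (𝓝 l)) :
    (∑'[conditional ℕ] k : ℕ, F (x + 1, k)) - ∑'[conditional ℕ] k : ℕ, F (x, k) =
      l - G (x, 0) := by
  have hsum := (h.hasSum_sub hG).add hF.hasSum
  simp only [sub_add_cancel] at hsum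
  rw [hsum.tsum_eq, add_sub_cancel_right]

theorem wz_pair_periodic_general [T2Space M] (h : IsWZPair F G)
    (hGsum : ∀ x : R, Summable (fun n : ℕ ↦ G (x + n, 0)) (conditional ℕ))
    (hFsum : ∀ x : R, Summable (fun n : ℕ ↦ F (x, n)) (conditional ℕ))
    (hGlim : ∀ x : R, Tendsto (fun n : ℕ ↦ G (x, n)) atTop (𝓝 0)) :
    Function.Periodic
      (fun x ↦ (∑'[conditional ℕ] n : ℕ, G (x + n, 0)) - ∑'[conditional ℕ] n : ℕ, F (x, n)) 1 := by
  intro x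
  have hG := tsum_conditional_add_one_add_natCast (g := fun y ↦ G (y, 0)) (hGsum x)
  have hF := h.tsum_sub_tsum (hFsum x) (hGlim x)
  rw [zero_sub, sub_eq_iff_eq_add] at hF
  simp only [hG, hF]
  abel

end WZPair

/-- If `(F, G)` is a WZ-pair of complex functions whose relevant series
converge and whose `G`-values tend to zero appropriately, then
`t x = ∑' n, G (x+n, 0) - ∑' n, F (x, n)` satisfies `t (x+1) = t x`. -/
theorem wz_pair_periodic (F G : ℂ × ℂ → ℂ)
    (hWZ : ∀ n k : ℂ, F (n + 1, k) - F (n, k) = G (n, k + 1) - G (n, k))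
    (hGsum : ∀ x : ℂ, Summable (fun n : ℕ => G (x + n, 0)))
    (hFsum : ∀ x : ℂ, Summable (fun n : ℕ => F (x, n)))
    (hGlim : ∀ x : ℂ, Filter.Tendsto (fun n : ℕ => G (x + n, 0)) Filter.atTop (nhds 0))
    (hGlim' : ∀ x : ℂ, Filter.Tendsto (fun n : ℕ => G (x, n)) Filter.atTop (nhds 0))
    (t : ℂ → ℂ)
    (ht : ∀ x : ℂ, t x = (∑' n : ℕ, G (x + n, 0)) - ∑' n : ℕ, F (x, n)) :
    ∀ x : ℂ, t (x + 1) = t x := by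
  simpa only [Function.Periodic, ht, tsum_eq_of_summable_unconditional (hGsum _),
    tsum_eq_of_summable_unconditional (hFsum _)] using
    wz_pair_periodic_general hWZ (fun x ↦ (hGsum x).mono_filter le_atTop)
      (fun x ↦ (hFsum x).mono_filter le_atTop) hGlim'
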